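/- 825265 = 5 · 7 · 17 · 19 · 73 is a Carmichael number with exactly 5 distinct prime factors, and it is the smallest such: every Carmichael number with exactly 5 distinct prime factors is at least 825265. -/

import Mathlib

/-- A Carmichael number: a composite natural number `N` such that
`b ^ (N - 1) ≡ 1 [MOD N]` for every `b` coprime to `N`. -/
def IsCarmichael (N : ℕ) : Prop :=
  1 < N ∧ ¬ N.Prime ∧ ∀ b : ℕ, Nat.Coprime b N → b ^ (N - 1) ≡ 1 [MOD N]

/-!
By Korselt's criterion, a composite `N > 1` is a Carmichael number iff it is squarefree and
`p - 1 ∣ N - 1` for every prime `p ∣ N`: both conditions together say that the Carmichael function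
of `N` divides `N - 1`. This settles `825265 = 5 · 7 · 17 · 19 · 73`. A Carmichael number is
moreover odd, and `p - 1 ∣ N - 1` forces `p - 1 ∣ N / p - 1`, so its prime factors are at most `√N`.
Hence below `825265` only the products of five distinct odd primes up to `908` compete; there are
2485 of them, and each violates the divisibility in Korselt's criterion.
-/

open ArithmeticFunction (carmichael)

theorem forall_coprime_pow_modEq_one_iff_carmichael_dvd {n k : ℕ} (hn : n ≠ 0) :
    (∀ b : ℕ, b.Coprime n → b ^ k ≡ 1 [MOD n]) ↔ carmichael n ∣ k := by
  have : NeZero n := ⟨hn⟩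
  rw [ArithmeticFunction.carmichael_eq_exponent hn, Monoid.exponent_dvd_iff_forall_pow_eq_one]
  simp only [← ZMod.natCast_eq_natCast_iff, Nat.cast_pow, Nat.cast_one, Units.ext_iff,
    Units.val_pow_eq_pow_val, Units.val_one]
  constructor
  · intro h u
    simpa only [ZMod.natCast_val, ZMod.cast_id', id_eq] using
      h (u : ZMod n).val (ZMod.val_coe_unit_coprime u)
  · intro h b hb
    exact h (ZMod.unitOfCoprime b hb)

theorem carmichael_prime {p : ℕ} (hp : p.Prime) : carmichael p = p - 1 := by
  have : Fact p.Prime := ⟨hp⟩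
  rw [ArithmeticFunction.carmichael_eq_exponent hp.ne_zero, IsCyclic.exponent_eq_card,
    Nat.card_eq_fintype_card, ZMod.card_units]

theorem prime_dvd_carmichael_of_sq_dvd {p n : ℕ} (hp : p.Prime) (h : p ^ 2 ∣ n) :
    p ∣ carmichael n := by
  refine dvd_trans ?_ (ArithmeticFunction.carmichael_dvd h)
  rcases eq_or_ne p 2 with rfl | hp2
  · rw [ArithmeticFunction.carmichael_two_pow_of_le_two le_rfl, pow_one]
  · rw [ArithmeticFunction.carmichael_pow_of_prime_ne_two 2 hp hp2,
      Nat.totient_prime_pow_succ hp, pow_one]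
    exact dvd_mul_right p (p - 1)

theorem carmichael_dvd_iff_of_squarefree {n k : ℕ} (hn : Squarefree n) :
    carmichael n ∣ k ↔ ∀ p ∈ n.primeFactors, p - 1 ∣ k := by
  have : NeZero n := ⟨hn.ne_zero⟩
  rw [ArithmeticFunction.carmichael_factorization, Finset.lcm_dvd_iff]
  refine forall₂_congr fun p hp ↦ ?_
  have hpp := Nat.prime_of_mem_primeFactors hp
  rw [Nat.factorization_eq_one_of_squarefree hn hpp (Nat.dvd_of_mem_primeFactors hp), pow_one,
    carmichael_prime hpp]

theorem isCarmichael_iff_korselt {N : ℕ} :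
    IsCarmichael N ↔
      1 < N ∧ ¬ N.Prime ∧ Squarefree N ∧ ∀ p ∈ N.primeFactors, p - 1 ∣ N - 1 := by
  refine and_congr_right fun hN ↦ and_congr_right fun _ ↦ ?_
  rw [forall_coprime_pow_modEq_one_iff_carmichael_dvd (by lia)]
  refine ⟨fun h ↦ ?_, fun ⟨hsq, h⟩ ↦ (carmichael_dvd_iff_of_squarefree hsq).2 h⟩
  have hsq : Squarefree N := by
    rw [Nat.squarefree_iff_prime_squarefree]
    intro p hp hpp
    have hpN : p ∣ N := (dvd_mul_right p p).trans hpp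
    have hpN' : p ∣ N - 1 := (prime_dvd_carmichael_of_sq_dvd hp (sq p ▸ hpp)).trans h
    have hcop : N.Coprime (N - 1) :=
      (Nat.coprime_self_sub_right hN.le).2 (Nat.coprime_one_right N)
    exact Nat.not_coprime_of_dvd_of_dvd hp.one_lt hpN hpN' hcop
  exact ⟨hsq, (carmichael_dvd_iff_of_squarefree hsq).1 h⟩

theorem primeFactorsList_825265 : Nat.primeFactorsList 825265 = [5, 7, 17, 19, 73] := by
  simp

theorem primeFactors_825265 : Nat.primeFactors 825265 = {5, 7, 17, 19, 73} := by
  rw [Nat.primeFactors, primeFactorsList_825265]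
  rfl

theorem isCarmichael_825265 : IsCarmichael 825265 := by
  refine isCarmichael_iff_korselt.2 ⟨by norm_num, by norm_num, ?_, ?_⟩
  · rw [Nat.squarefree_iff_nodup_primeFactorsList (by norm_num), primeFactorsList_825265]
    decide
  · rw [primeFactors_825265]
    decide

namespace IsCarmichael

variable {N : ℕ}

theorem squarefree (hN : IsCarmichael N) : Squarefree N :=
  (isCarmichael_iff_korselt.1 hN).2.2.1

theorem sub_one_dvd_sub_one (hN : IsCarmichael N) {p : ℕ} (hp : p ∈ N.primeFactors) :
    p - 1 ∣ N - 1 :=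
  (isCarmichael_iff_korselt.1 hN).2.2.2 p hp

-- For even `N` the exponent `N - 1` is odd, so the base `b = N - 1 ≡ -1` yields `-1 ≡ 1`.
theorem odd (hN : IsCarmichael N) : Odd N := by
  obtain ⟨hN1, hNp, hpow⟩ := hN
  by_contra hodd
  have hexp : Odd (N - 1) := Nat.Even.sub_odd hN1.le (Nat.not_odd_iff_even.1 hodd) odd_one
  have hcop : (N - 1).Coprime N := (Nat.coprime_self_sub_left hN1.le).2 (Nat.coprime_one_left N)
  have hneg : (-1 : ZMod N) = 1 := by
    have h := (ZMod.natCast_eq_natCast_iff _ _ _).2 (hpow (N - 1) hcop)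
    simpa [Nat.cast_sub hN1.le, hexp.neg_one_pow] using h
  have hN2 : N ∣ 2 := by
    rw [← ZMod.natCast_eq_zero_iff, Nat.cast_two, ← one_add_one_eq_two]
    nth_rw 1 [← hneg]
    exact neg_add_cancel 1
  exact hNp (by rw [(Nat.dvd_prime_two_le Nat.prime_two hN1).1 hN2]; exact Nat.prime_two)

theorem le_sqrt_of_mem_primeFactors (hN : IsCarmichael N) {p : ℕ} (hp : p ∈ N.primeFactors) :
    p ≤ N.sqrt := by
  have hpp := Nat.prime_of_mem_primeFactors hp
  obtain ⟨m, rfl⟩ := Nat.dvd_of_mem_primeFactors hp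
  have hm : 1 < m := by
    have hm0 : m ≠ 0 := right_ne_zero_of_mul hN.squarefree.ne_zero
    have hm1 : m ≠ 1 := by
      rintro rfl
      exact hN.2.1 (by rwa [mul_one])
    lia
  have hdvd : p - 1 ∣ m - 1 := by
    have hsplit : p * m - 1 = (p - 1) * m + (m - 1) := by
      have := Nat.sub_one_mul p m
      have := Nat.le_mul_of_pos_left m hpp.pos
      lia
    rw [← Nat.dvd_add_right (dvd_mul_right (p - 1) m), ← hsplit]
    exact hN.sub_one_dvd_sub_one hp
  have hpm : p ≤ m := by
    have := Nat.le_of_dvd (by lia) hdvd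
    lia
  exact Nat.le_sqrt.2 (Nat.mul_le_mul_left p hpm)

end IsCarmichael

/-- The increasing list of the odd primes up to `n`, found by trial division by all `d ≤ √n`.
It stands in for filtering by `Nat.Prime`, which the kernel evaluates too slowly. -/
def oddPrimesLE (n : ℕ) : List ℕ :=
  (List.range' 3 (n - 2)).filter fun p ↦
    (List.range' 2 (n.sqrt - 1)).all fun d ↦ d ∣ p → d = p

theorem mem_oddPrimesLE {n p : ℕ} : p ∈ oddPrimesLE n ↔ p.Prime ∧ p ≠ 2 ∧ p ≤ n := by
  simp only [oddPrimesLE, List.mem_filter, List.mem_range'_1, List.all_eq_true,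
    decide_eq_true_eq]
  constructor
  · rintro ⟨⟨hp3, hpn⟩, hd⟩
    refine ⟨Nat.prime_def_le_sqrt.2 ⟨by lia, fun d hd2 hdp hdvd ↦ ?_⟩, by lia, by lia⟩
    have hdn : d ≤ n.sqrt := hdp.trans (Nat.sqrt_le_sqrt (by lia))
    have hlt : p.sqrt < p := Nat.sqrt_lt_self (by lia)
    have := hd d ⟨hd2, by lia⟩ hdvd
    lia
  · rintro ⟨hp, hp2, hpn⟩
    have := hp.two_le
    exact ⟨by lia, fun d hd hdvd ↦ (Nat.dvd_prime_two_le hp hd.1).1 hdvd⟩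

theorem pairwise_lt_oddPrimesLE (n : ℕ) : (oddPrimesLE n).Pairwise (· < ·) :=
  List.Pairwise.filter _ List.pairwise_lt_range'

/-- For an increasing list `L` of positive numbers and `M ≠ 0`, the sublists of `L` of length `k`
whose product is at most `M`. A branch is cut as soon as even `k` copies of the least remaining
element have a product above `M`. -/
def sublistsLenProdLE : ℕ → ℕ → List ℕ → List (List ℕ)
  | 0, _, _ => [[]]
  | _ + 1, _, [] => []
  | k + 1, M, p :: L =>
    if M < p ^ (k + 1) then []
    else sublistsLenProdLE (k + 1) M L ++ (sublistsLenProdLE k (M / p) L).map (p :: ·)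

theorem mem_sublistsLenProdLE {L l : List ℕ} {k M : ℕ} (hL : L.Pairwise (· ≤ ·))
    (hpos : ∀ p ∈ L, 0 < p) (hl : l.Sublist L) (hlen : l.length = k) (hprod : l.prod ≤ M) :
    l ∈ sublistsLenProdLE k M L := by
  induction L generalizing l k M with
  | nil =>
    obtain rfl := List.sublist_nil.1 hl
    obtain rfl := hlen
    simp [sublistsLenProdLE]
  | cons p L ih =>
    obtain ⟨hp, hL'⟩ := List.pairwise_cons.1 hL
    obtain ⟨hp0, hpos'⟩ := List.forall_mem_cons.1 hpos
    cases k with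
    | zero => simp [sublistsLenProdLE, List.length_eq_zero_iff.1 hlen]
    | succ k =>
      have hpow : p ^ (k + 1) ≤ l.prod := by
        rw [← hlen]
        refine List.pow_card_le_prod l p fun q hq ↦ ?_
        rcases List.mem_cons.1 (hl.subset hq) with rfl | hqL
        exacts [le_rfl, hp q hqL]
      rw [sublistsLenProdLE, if_neg (hpow.trans hprod).not_gt, List.mem_append]
      cases hl with
      | cons _ hl => exact .inl (ih hL' hpos' hl hlen hprod)
      | cons_cons _ hl =>
        refine .inr (List.mem_map_of_mem (ih hL' hpos' hl (Nat.succ.inj hlen) ?_))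
        rwa [Nat.le_div_iff_mul_le hp0, mul_comm, ← List.prod_cons]

theorem IsCarmichael.primeFactorsList_mem_sublistsLenProdLE {N M : ℕ} (hN : IsCarmichael N)
    (hNM : N ≤ M) :
    N.primeFactorsList ∈ sublistsLenProdLE N.primeFactors.card M (oddPrimesLE M.sqrt) := by
  have hsorted := pairwise_lt_oddPrimesLE M.sqrt
  have hnodup : N.primeFactorsList.Nodup := hN.squarefree.nodup_primeFactorsList
  have hsub : N.primeFactorsList ⊆ oddPrimesLE M.sqrt := by
    intro p hp
    refine mem_oddPrimesLE.2 ⟨Nat.prime_of_mem_primeFactorsList hp, ?_, ?_⟩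
    · exact (hN.odd.of_dvd_nat (Nat.dvd_of_mem_primeFactorsList hp)).ne_two_of_dvd_nat dvd_rfl
    · exact (hN.le_sqrt_of_mem_primeFactors (List.mem_toFinset.2 hp)).trans
        (Nat.sqrt_le_sqrt hNM)
  refine mem_sublistsLenProdLE (hsorted.imp le_of_lt)
    (fun p hp ↦ (mem_oddPrimesLE.1 hp).1.pos) ?_ ?_ ?_
  · exact List.sublist_of_subperm_of_pairwise (List.subperm_of_subset hnodup hsub)
      (N.primeFactorsList_sorted.pairwise) (hsorted.imp le_of_lt)
  · exact (List.toFinset_card_of_nodup hnodup).symm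
  · rwa [Nat.prod_primeFactorsList hN.squarefree.ne_zero]

theorem exists_not_sub_one_dvd_of_mem_sublistsLenProdLE_825264 :
    ∀ l ∈ sublistsLenProdLE 5 825264 (oddPrimesLE (Nat.sqrt 825264)),
      ∃ p ∈ l, ¬ p - 1 ∣ l.prod - 1 := by
  decide +kernel

theorem IsCarmichael.le_of_card_primeFactors_eq_five {N : ℕ} (hN : IsCarmichael N)
    (hcard : N.primeFactors.card = 5) : 825265 ≤ N := by
  by_contra hlt
  have hmem := hN.primeFactorsList_mem_sublistsLenProdLE (M := 825264) (by lia)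
  rw [hcard] at hmem
  obtain ⟨p, hp, hndvd⟩ := exists_not_sub_one_dvd_of_mem_sublistsLenProdLE_825264 _ hmem
  rw [Nat.prod_primeFactorsList hN.squarefree.ne_zero] at hndvd
  exact hndvd (hN.sub_one_dvd_sub_one (List.mem_toFinset.2 hp))

theorem carmichael_smallest_with_5_prime_factors :
    (825265 : ℕ) = 5 * 7 * 17 * 19 * 73 ∧ IsCarmichael 825265 ∧ (Nat.primeFactors 825265).card = 5 ∧
      ∀ N : ℕ, IsCarmichael N → N.primeFactors.card = 5 → 825265 ≤ N := by
  refine ⟨by norm_num, isCarmichael_825265, ?_,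
    fun N ↦ IsCarmichael.le_of_card_primeFactors_eq_five⟩
  rw [primeFactors_825265]
  rfl
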